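/- arXiv:2010.02490 — 10 statements merged into one kernel-verified Lean document; each statement's English description precedes it below -/
import Mathlib

section
/- Define, for a positive integer n, L_B(n) = 2n·sin(π/(2n))·cos(π/(2n) − (1/2)·arcsin((1/2)·sin(2π/n))) and U_L(n) = 2n·sin(π/(2n)). Then, as n → ∞ over the positive integers, U_L(n) − L_B(n) = π⁷/(32n⁶) + 11π⁹/(768n⁸) + O(1/n¹⁰); that is, the function n ↦ 2n·sin(π/(2n)) − 2n·sin(π/(2n))·cos(π/(2n) − (1/2)·arcsin((1/2)·sin(2π/n))) − π⁷/(32n⁶) − 11π⁹/(768n⁸) is O(n⁻¹⁰) along the filter atTop. -/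
open Real Filter Asymptotics

theorem aux_poly (k : ℕ) (q : ℝ → ℝ) (hq : Continuous q) :
    (fun x : ℝ => x ^ k * q x) =O[nhds 0] (fun x : ℝ => x ^ k) := by
  have h := (isBigO_refl (fun x : ℝ => x ^ k) (nhds 0)).mul
    ((hq.tendsto 0).isBigO_one ℝ)
  simpa using h

theorem aux_le (j k : ℕ) (h : k ≤ j) :
    (fun x : ℝ => x ^ j) =O[nhds 0] (fun x : ℝ => x ^ k) := by
  have := aux_poly k (fun x => x ^ (j - k)) (by fun_prop)
  refine this.congr_left fun x => ?_
  rw [← pow_add]; congr 1; omega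

theorem aux_sin : (fun y : ℝ => sin y - (y - y ^ 3 / 6 + y ^ 5 / 120)) =O[nhds 0]
    (fun y : ℝ => y ^ 7) := by
  refine IsBigO.of_bound 1 ?_
  filter_upwards [Metric.ball_mem_nhds (0 : ℝ) one_pos] with y hy
  have hy1 : |y| ≤ 1 := by
    rw [Metric.mem_ball, dist_zero_right, Real.norm_eq_abs] at hy; exact hy.le
  have h := Complex.exp_bound (x := (y : ℂ) * Complex.I) (by simpa using hy1) (n := 7) (by norm_num)
  have him := (Complex.abs_im_le_norm _).trans h
  have e : (Complex.exp ((y : ℂ) * Complex.I) - ∑ m ∈ Finset.range 7,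
      ((y : ℂ) * Complex.I) ^ m / (m.factorial : ℂ)).im
      = sin y - (y - y ^ 3 / 6 + y ^ 5 / 120) := by
    have e2 : (∑ m ∈ Finset.range 7, ((y : ℂ) * Complex.I) ^ m / (m.factorial : ℂ))
        = ((1 - y ^ 2 / 2 + y ^ 4 / 24 - y ^ 6 / 720 : ℝ) : ℂ)
          + ((y - y ^ 3 / 6 + y ^ 5 / 120 : ℝ) : ℂ) * Complex.I := by
      have h2 := Complex.I_sq
      have h3 : Complex.I ^ 3 = - Complex.I := Complex.I_pow_three
      have h4 := Complex.I_pow_four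
      have h5 : Complex.I ^ 5 = Complex.I := by rw [pow_succ, h4, one_mul]
      have h6 : Complex.I ^ 6 = -1 := by rw [pow_succ, h5, Complex.I_mul_I]
      simp only [Finset.sum_range_succ, Finset.sum_range_zero, Nat.factorial, mul_pow, h2, h3, h4,
        h5, h6]
      push_cast
      ring
    rw [e2, Complex.sub_im, Complex.exp_ofReal_mul_I_im, Complex.add_im, Complex.ofReal_im,
      Complex.im_ofReal_mul, Complex.I_im]
    ring
  rw [e] at him
  rw [Real.norm_eq_abs, norm_pow, Real.norm_eq_abs, one_mul]
  refine him.trans ?_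
  have : ‖(y : ℂ) * Complex.I‖ = |y| := by simp
  rw [this]
  refine mul_le_of_le_one_right (by positivity) ?_
  norm_num [Nat.factorial]

theorem aux_arcsin : (fun x : ℝ => arcsin ((1 / 2) * sin (2 * x)) - (x - x ^ 3 / 2 - x ^ 5 / 8))
    =O[nhds 0] (fun x : ℝ => x ^ 7) := by
  have hpc : Continuous (fun x : ℝ => x - x ^ 3 / 2 - x ^ 5 / 8) := by fun_prop
  have hp0 : Tendsto (fun x : ℝ => x - x ^ 3 / 2 - x ^ 5 / 8) (nhds 0) (nhds 0) := by
    simpa using hpc.tendsto 0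
  have h20 : Tendsto (fun x : ℝ => 2 * x) (nhds 0) (nhds 0) := by
    have h : Continuous (fun x : ℝ => 2 * x) := by fun_prop
    simpa using h.tendsto 0
  have hp1 : (fun x : ℝ => x - x ^ 3 / 2 - x ^ 5 / 8) =O[nhds 0] (fun x : ℝ => x) := by
    have := aux_poly 1 (fun x => 1 - x ^ 2 / 2 - x ^ 4 / 8) (by fun_prop)
    exact this.congr (fun x => by ring) (fun x => by ring)
  have h1 := (aux_sin.comp_tendsto hp0).trans (hp1.pow 7)
  have h2 : (fun x : ℝ => sin (2 * x) - (2 * x - (2 * x) ^ 3 / 6 + (2 * x) ^ 5 / 120))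
      =O[nhds 0] (fun x : ℝ => x ^ 7) :=
    (aux_sin.comp_tendsto h20).trans
      (((isBigO_refl (fun x : ℝ => x) (nhds 0)).const_mul_left 2).pow 7)
  have h3 := aux_poly 7 (fun x : ℝ => (-1/12)*x^0 + (-5/192)*x^2 + (1/128)*x^4 + (11/15360)*x^8 + (1/2048)*x^10 + (-1/32768)*x^14 + (-1/196608)*x^16 + (-1/3932160)*x^18) (by fun_prop)
  have h4 : (fun x : ℝ => (1 / 2) * sin (2 * x) - sin (x - x ^ 3 / 2 - x ^ 5 / 8)) =O[nhds 0]
      (fun x : ℝ => x ^ 7) := by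
    refine (((h2.const_mul_left (1 / 2)).sub h1).sub h3).congr_left fun x => ?_
    simp only [Function.comp]
    ring
  have hd := (Real.hasStrictDerivAt_arcsin (x := 0) (by norm_num) (by norm_num)).isBigO_sub
  have ht : Tendsto (fun x : ℝ => ((1 / 2) * sin (2 * x), sin (x - x ^ 3 / 2 - x ^ 5 / 8)))
      (nhds 0) (nhds (0, 0)) := by
    have : Continuous (fun x : ℝ => ((1 / 2) * sin (2 * x), sin (x - x ^ 3 / 2 - x ^ 5 / 8))) := by
      fun_prop
    simpa using this.tendsto 0
  refine ((hd.comp_tendsto ht).trans h4).congr' ?_ EventuallyEq.rfl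
  have hpi : (0 : ℝ) < π / 2 := by positivity
  filter_upwards [hp0.eventually (Ioo_mem_nhds (neg_lt_zero.2 hpi) hpi)] with x hx
  simp only [Function.comp]
  rw [arcsin_sin hx.1.le hx.2.le]

theorem aux_cos : (fun y : ℝ => cos y - (1 - y ^ 2 / 2)) =O[nhds 0] (fun y : ℝ => y ^ 4) := by
  refine IsBigO.of_bound (5 / 96) ?_
  filter_upwards [Metric.ball_mem_nhds (0 : ℝ) one_pos] with y hy
  have hy1 : |y| ≤ 1 := by
    rw [Metric.mem_ball, dist_zero_right, Real.norm_eq_abs] at hy; exact hy.le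
  have := Real.cos_bound hy1
  rw [Real.norm_eq_abs, norm_pow, Real.norm_eq_abs]
  linarith

theorem aux_gap : (fun x : ℝ => 2 * sin (x / 2) *
      (1 - cos (x / 2 - (1 / 2) * arcsin ((1 / 2) * sin (2 * x)))) - x ^ 7 / 32 - 11 * x ^ 9 / 768)
    =O[nhds 0] (fun x : ℝ => x ^ 11) := by
  set θ : ℝ → ℝ := fun x => x / 2 - (1 / 2) * arcsin ((1 / 2) * sin (2 * x)) with hθ
  have t1 : (fun x => θ x - (x ^ 3 / 4 + x ^ 5 / 16)) =O[nhds 0] (fun x : ℝ => x ^ 7) := by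
    refine (aux_arcsin.const_mul_left (-1 / 2)).congr_left fun x => ?_
    simp only [hθ]; ring
  have t2 : (fun x : ℝ => x ^ 3 / 4 + x ^ 5 / 16) =O[nhds 0] (fun x : ℝ => x ^ 3) :=
    (aux_poly 3 (fun x => 1 / 4 + x ^ 2 / 16) (by fun_prop)).congr_left fun x => by ring
  have t3 : θ =O[nhds 0] (fun x : ℝ => x ^ 3) :=
    ((t1.trans (aux_le 7 3 (by norm_num))).add t2).congr_left fun x => by ring
  have t0 : Tendsto θ (nhds 0) (nhds 0) := by
    have : Continuous θ := by
      have := Real.continuous_arcsin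
      fun_prop
    simpa [hθ] using this.tendsto 0
  have c1 : (fun x => cos (θ x) - (1 - θ x ^ 2 / 2)) =O[nhds 0] (fun x : ℝ => x ^ 10) :=
    ((aux_cos.comp_tendsto t0).trans (t3.pow 4)).trans
      ((aux_le 12 10 (by norm_num)).congr_left fun x => by ring)
  have c2 : (fun x => (θ x - (x ^ 3 / 4 + x ^ 5 / 16)) * (θ x + (x ^ 3 / 4 + x ^ 5 / 16)))
      =O[nhds 0] (fun x : ℝ => x ^ 10) :=
    (t1.mul (t3.add t2)).congr_right fun x => by ring
  have c3 : (fun x => 1 - cos (θ x) - (x ^ 6 / 32 + x ^ 8 / 64)) =O[nhds 0]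
      (fun x : ℝ => x ^ 10) := by
    have h := (isBigO_refl (fun x : ℝ => x ^ 10) (nhds 0)).const_mul_left (1 / 512)
    refine (((c2.const_mul_left (1 / 2)).sub c1).add h).congr_left fun x => ?_
    ring
  have c4 : (fun x => 1 - cos (θ x)) =O[nhds 0] (fun x : ℝ => x ^ 6) := by
    have h := aux_poly 6 (fun x => 1 / 32 + x ^ 2 / 64) (by fun_prop)
    refine ((c3.trans (aux_le 10 6 (by norm_num))).add h).congr_left fun x => ?_
    ring
  have h20 : Tendsto (fun x : ℝ => x / 2) (nhds 0) (nhds 0) := by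
    simpa using (continuous_id.div_const 2 : Continuous (fun x : ℝ => x / 2)).tendsto 0
  have s1 : (fun x : ℝ => sin (x / 2) - (x / 2 - x ^ 3 / 48)) =O[nhds 0]
      (fun x : ℝ => x ^ 5) := by
    have h := ((aux_sin.comp_tendsto h20).trans
      ((((isBigO_refl (fun x : ℝ => x) (nhds 0)).const_mul_left (1 / 2)).congr_left
        (fun x => by ring : ∀ x : ℝ, _ = x / 2)).pow 7)).trans (aux_le 7 5 (by norm_num))
    refine (h.add ((isBigO_refl (fun x : ℝ => x ^ 5) (nhds 0)).const_mul_left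
      (1 / 3840))).congr_left fun x => ?_
    simp only [Function.comp]
    ring
  have s2 : (fun x : ℝ => x - x ^ 3 / 24) =O[nhds 0] (fun x : ℝ => x) :=
    (aux_poly 1 (fun x => 1 - x ^ 2 / 24) (by fun_prop)).congr (fun x => by ring)
      (fun x => by ring)
  have g1 := ((s1.mul c4).const_mul_left 2).congr_right
    (fun x => by ring : ∀ x : ℝ, _ = x ^ 11)
  have g2 := (s2.mul c3).congr_right (fun x => by ring : ∀ x : ℝ, _ = x ^ 11)
  have g3 := (isBigO_refl (fun x : ℝ => x ^ 11) (nhds 0)).const_mul_left (-1 / 1536)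
  refine ((g1.add g2).add g3).congr_left fun x => ?_
  ring

/-- Asymptotics of the perimeter gap for the polygon `B_n`:
`2n sin(π/2n) − L(B_n) = π⁷/(32 n⁶) + 11π⁹/(768 n⁸) + O(1/n¹⁰)` as `n → ∞`. -/
theorem perimeter_gap_Bn_asymptotics :
    (fun n : ℕ =>
        2 * n * sin (π / (2 * n)) -
          2 * n * sin (π / (2 * n)) *
            cos (π / (2 * n) - (1 / 2) * arcsin ((1 / 2) * sin (2 * π / n))) -
          π ^ 7 / (32 * (n : ℝ) ^ 6) - 11 * π ^ 9 / (768 * (n : ℝ) ^ 8)) =O[atTop]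
      (fun n : ℕ => 1 / (n : ℝ) ^ 10) := by
  have ht : Tendsto (fun n : ℕ => π / (n : ℝ)) atTop (nhds 0) :=
    tendsto_const_div_atTop_nhds_zero_nat π
  have h := (aux_gap.comp_tendsto ht)
  have hn := (isBigO_refl (fun n : ℕ => (n : ℝ)) atTop).mul h
  have hc : (fun n : ℕ => (n : ℝ) * ((fun x : ℝ => x ^ 11) ∘ fun n : ℕ => π / (n : ℝ)) n)
      =O[atTop] (fun n : ℕ => 1 / (n : ℝ) ^ 10) := by
    refine ((isBigO_refl (fun n : ℕ => 1 / (n : ℝ) ^ 10) atTop).const_mul_left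
      (π ^ 11)).congr' ?_ EventuallyEq.rfl
    filter_upwards [eventually_gt_atTop 0] with n hn
    have : (n : ℝ) ≠ 0 := by positivity
    simp only [Function.comp]
    field_simp
  refine (hn.trans hc).congr' ?_ EventuallyEq.rfl
  filter_upwards [eventually_gt_atTop 0] with n hn
  have h0 : (n : ℝ) ≠ 0 := by positivity
  simp only [Function.comp]
  have e1 : π / (n : ℝ) / 2 = π / (2 * n) := by field_simp
  have e2 : 2 * (π / (n : ℝ)) = 2 * π / n := by ring
  rw [e1, e2]
  field_simp
end

section
/- Let n ≥ 3 be an integer, let β be a real number, and let k be a positive integer. Then ∑_{j=1}^{k} (−1)^{j−1}·sin((2j−1)·π/n + (−1)^{j−1}·β) = sin(2kπ/n)·sin(β − (−1)^k·π/n) / sin(2π/n). -/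
open Real Finset

theorem vertex_aux1 (t a c : ℝ) :
    sin (t + c) * sin (2 * a) = sin (t + 2 * a) * sin c - sin t * sin (c - 2 * a) := by
  rw [sin_add t c, sin_add t, sin_sub]; ring

/-- Closed form for the abscissa of the `k`-th vertex in the construction of `B_n`:
`∑_{j=1}^{k} (−1)^{j−1} sin((2j−1)π/n + (−1)^{j−1}β)
  = sin(2kπ/n) sin(β − (−1)^k π/n) / sin(2π/n)`. -/
theorem vertex_abscissa_closed_form (n : ℕ) (hn : 3 ≤ n) (β : ℝ) (k : ℕ) (hk : 1 ≤ k) :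
    ∑ j ∈ Finset.Icc 1 k,
        (-1 : ℝ) ^ (j - 1) * sin ((2 * (j : ℝ) - 1) * π / n + (-1 : ℝ) ^ (j - 1) * β) =
      sin (2 * (k : ℝ) * π / n) * sin (β - (-1 : ℝ) ^ k * (π / n)) / sin (2 * π / n) := by
  clear hk
  have hn' : (3 : ℝ) ≤ n := by exact_mod_cast hn
  have hs : sin (2 * π / n) ≠ 0 := by
    apply ne_of_gt
    apply sin_pos_of_pos_of_lt_pi
    · have := pi_pos
      positivity
    · rw [div_lt_iff₀ (by linarith)]
      nlinarith [pi_pos]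
  rw [eq_div_iff hs]
  induction k with
  | zero => simp
  | succ k ih =>
    rw [Finset.sum_Icc_succ_top (by omega), add_mul, ih, Nat.add_sub_cancel, pow_succ]
    push_cast
    have e1 : 2 * ((k : ℝ) + 1) * π / n = 2 * k * π / n + 2 * (π / n) := by ring
    have e2 : (2 * ((k : ℝ) + 1) - 1) * π / n = 2 * k * π / n + π / n := by ring
    have e3 : 2 * π / n = 2 * (π / n) := by ring
    rw [e1, e2, e3]
    generalize 2 * (k : ℝ) * π / n = t
    generalize π / (n : ℝ) = a
    rcases neg_one_pow_eq_or ℝ k with h | h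
    · rw [h]
      have := vertex_aux1 t a (a + β)
      rw [show t + a + 1 * β = t + (a + β) by ring, show β - 1 * -1 * a = a + β by ring,
        show β - 1 * a = a + β - 2 * a by ring]
      linarith
    · rw [h]
      have := vertex_aux1 t a (a - β)
      rw [show t + a + -1 * β = t + (a - β) by ring, show β - -1 * -1 * a = -(a - β) by ring,
        show β - -1 * a = -(a - β - 2 * a) by ring, sin_neg, sin_neg]
      linarith
end

section
/- Let n ≥ 3 be an integer, let β be a real number, and let k be a positive integer. Then ∑_{j=1}^{k} (−1)^{j−1}·cos((2j−1)·π/n + (−1)^{j−1}·β) = (sin(π/n − β) + cos(2kπ/n)·sin(β − (−1)^k·π/n)) / sin(2π/n). -/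
open Real Finset

/-- Closed form for the ordinate of the `k`-th vertex in the construction of `B_n`:
`∑_{j=1}^{k} (−1)^{j−1} cos((2j−1)π/n + (−1)^{j−1}β)
  = (sin(π/n − β) + cos(2kπ/n) sin(β − (−1)^k π/n)) / sin(2π/n)`. -/
theorem vertex_ordinate_closed_form (n : ℕ) (hn : 3 ≤ n) (β : ℝ) (k : ℕ) (hk : 1 ≤ k) :
    ∑ j ∈ Finset.Icc 1 k,
        (-1 : ℝ) ^ (j - 1) * cos ((2 * (j : ℝ) - 1) * π / n + (-1 : ℝ) ^ (j - 1) * β) =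
      (sin (π / n - β) + cos (2 * (k : ℝ) * π / n) * sin (β - (-1 : ℝ) ^ k * (π / n))) /
        sin (2 * π / n) := by
  have hn' : (3 : ℝ) ≤ n := by exact_mod_cast hn
  have hpos : 0 < sin (2 * π / n) := by
    apply sin_pos_of_pos_of_lt_pi
    · positivity
    · rw [div_lt_iff₀ (by linarith)]
      nlinarith [pi_pos]
  clear hk
  rw [eq_div_iff hpos.ne']
  have e2 : 2 * π / n = 2 * (π / n) := by ring
  rw [e2]
  induction k with
  | zero =>
    simp only [Nat.cast_zero, pow_zero]
    have : sin (β - 1 * (π / n)) = - sin (π / n - β) := by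
      rw [← sin_neg]; congr 1; ring
    rw [this]
    simp
  | succ k ih =>
    rw [Finset.sum_Icc_succ_top (by omega), add_mul, ih]
    generalize ha : π / n = a
    have h1 : 2 * (k : ℝ) * π / n = (2 * k + 1) * a - a := by rw [← ha]; ring
    have h2 : 2 * ((k + 1 : ℕ) : ℝ) * π / n = (2 * k + 1) * a + a := by
      rw [← ha]; push_cast; ring
    have h3 : (2 * ((k + 1 : ℕ) : ℝ) - 1) * π / n = (2 * k + 1) * a := by
      rw [← ha]; push_cast; ring
    rw [h1, h2, h3, Nat.add_sub_cancel, pow_succ]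
    generalize (2 * (k : ℝ) + 1) * a = x
    rcases neg_one_pow_eq_or ℝ k with h | h <;> rw [h]
    · simp only [one_mul, neg_one_mul, sub_neg_eq_add, cos_add, cos_sub, sin_add, sin_sub,
        sin_two_mul]
      ring
    · simp only [neg_one_mul, neg_neg, one_mul, sub_neg_eq_add, cos_add, cos_sub, sin_add, sin_sub,
        sin_two_mul, cos_neg, sin_neg]
      ring
end

section
/- Let n = 2^s for an integer s ≥ 3 and set β = π/n − arcsin((1/2)·sin(2π/n)). Then ∑_{j=1}^{n/4} (−1)^{j−1}·sin((2j−1)·π/n + (−1)^{j−1}·β) = −1/2 and ∑_{j=1}^{n/4} (−1)^{j−1}·cos((2j−1)·π/n + (−1)^{j−1}·β) = 1/2. (In other words, the vertex v_{n/4} of the polygon B_n has coordinates (−1/2, 1/2).) -/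
open Real Finset

lemma aux_sums (t β : ℝ) (k : ℕ) :
    sin (2 * t) * (∑ j ∈ Finset.Icc 1 (2 * k),
        (-1 : ℝ) ^ (j - 1) * sin ((2 * (j : ℝ) - 1) * t + (-1 : ℝ) ^ (j - 1) * β)) =
      sin (β - t) * sin (4 * k * t) ∧
    sin (2 * t) * (∑ j ∈ Finset.Icc 1 (2 * k),
        (-1 : ℝ) ^ (j - 1) * cos ((2 * (j : ℝ) - 1) * t + (-1 : ℝ) ^ (j - 1) * β)) =
      -(sin (β - t) * (1 - cos (4 * k * t))) := by
  induction k with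
  | zero => simp
  | succ k ih =>
    obtain ⟨h1, h2⟩ := ih
    have e : 2 * (k + 1) = 2 * k + 1 + 1 := by ring
    have p1 : (-1 : ℝ) ^ (2 * k) = 1 := by simp
    have p2 : (-1 : ℝ) ^ (2 * k + 1) = -1 := by simp [pow_succ]
    have a1 : (2 * ((2 * k + 1 : ℕ) : ℝ) - 1) * t + 1 * β
        = (4 * k * t + 2 * t) + (β - t) := by push_cast; ring
    have a2 : (2 * ((2 * k + 1 + 1 : ℕ) : ℝ) - 1) * t + (-1) * β
        = (4 * k * t + 2 * t) - (β - t) := by push_cast; ring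
    have a3 : 4 * ((k + 1 : ℕ) : ℝ) * t = (4 * k * t + 2 * t) + 2 * t := by push_cast; ring
    have a4 : 4 * (k : ℝ) * t = (4 * k * t + 2 * t) - 2 * t := by ring
    rw [e, Finset.sum_Icc_succ_top (by omega), Finset.sum_Icc_succ_top (by omega),
      Finset.sum_Icc_succ_top (by omega), Finset.sum_Icc_succ_top (by omega)]
    simp only [Nat.add_sub_cancel, p1, p2]
    rw [a1, a2, a3, mul_add, mul_add, mul_add, mul_add, h1, h2]
    generalize β - t = d at *
    have s4 := congrArg sin a4
    have c4 := congrArg cos a4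
    rw [sin_sub] at s4
    rw [cos_sub] at c4
    rw [s4, c4]
    generalize 4 * (k : ℝ) * t + 2 * t = A at *
    rw [sin_add A d, sin_sub A d, cos_add A d, cos_sub A d, sin_add A, cos_add A]
    constructor <;> ring

/-- The vertex `v_{n/4}` of the polygon `B_n` has coordinates `(−1/2, 1/2)`. -/
theorem vertex_quarter_coords (s : ℕ) (hs : 3 ≤ s) (n : ℕ) (hn : n = 2 ^ s)
    (β : ℝ) (hβ : β = π / n - arcsin ((1 / 2) * sin (2 * π / n))) :
    (∑ j ∈ Finset.Icc 1 (n / 4),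
        (-1 : ℝ) ^ (j - 1) * sin ((2 * (j : ℝ) - 1) * π / n + (-1 : ℝ) ^ (j - 1) * β) =
      -(1 / 2)) ∧
    (∑ j ∈ Finset.Icc 1 (n / 4),
        (-1 : ℝ) ^ (j - 1) * cos ((2 * (j : ℝ) - 1) * π / n + (-1 : ℝ) ^ (j - 1) * β) =
      1 / 2) := by
  obtain ⟨r, rfl⟩ := Nat.exists_eq_add_of_le hs
  obtain ⟨k, hk⟩ : ∃ k : ℕ, k = 2 ^ r := ⟨_, rfl⟩
  have hk0 : 0 < k := by rw [hk]; positivity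
  have hnk : n = 8 * k := by rw [hn, hk, pow_add]; norm_num
  have hn4 : n / 4 = 2 * k := by omega
  have hkR : (1 : ℝ) ≤ k := by exact_mod_cast hk0
  have hnR : (n : ℝ) = 8 * k := by rw [hnk]; push_cast; ring
  have hpos : 0 < sin (2 * (π / n)) := by
    apply sin_pos_of_pos_of_lt_pi
    · rw [hnR]; positivity
    · rw [hnR, ← mul_div_assoc, div_lt_iff₀ (by positivity)]
      nlinarith [pi_pos]
  have hd : sin (β - π / n) = -(1 / 2 * sin (2 * (π / n))) := by
    have : β - π / n = -arcsin ((1 / 2) * sin (2 * (π / n))) := by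
      rw [hβ, mul_div_assoc]; ring
    rw [this, sin_neg, sin_arcsin]
    · linarith
    · linarith [sin_le_one (2 * (π / n))]
  have h4 : 4 * (k : ℝ) * (π / n) = π / 2 := by
    rw [hnR]; field_simp; norm_num
  obtain ⟨h1, h2⟩ := aux_sums (π / n) β k
  rw [h4, hd] at h1 h2
  rw [sin_pi_div_two] at h1
  rw [cos_pi_div_two] at h2
  rw [hn4]
  simp only [mul_div_assoc]
  constructor
  · apply mul_left_cancel₀ hpos.ne'
    rw [h1]; ring
  · apply mul_left_cancel₀ hpos.ne'
    rw [h2]; ring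
end

section
/- Define, for a positive integer n, L_Q(n) = 2n·sin(π/(2n))·cos(π/8 − (1/2)·arcsin(cos(π/n)/√2)). Then, as n → ∞ over the positive integers, 2n·sin(π/(2n)) − L_Q(n) = π⁵/(32n⁴) + O(1/n⁶); that is, the function n ↦ 2n·sin(π/(2n)) − 2n·sin(π/(2n))·cos(π/8 − (1/2)·arcsin(cos(π/n)/√2)) − π⁵/(32n⁴) is O(n⁻⁶) along the filter atTop. -/
open Real Filter Asymptotics

set_option maxHeartbeats 1000000 in
lemma gap_theta (x : ℝ) (hx0 : 0 ≤ x) (hx1 : x ≤ 1) :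
    |1 - cos (π / 8 - (1 / 2) * arcsin (cos x / Real.sqrt 2)) - x ^ 4 / 32| ≤ 2 * x ^ 6 := by
  have hs2 : (0 : ℝ) < Real.sqrt 2 := by positivity
  have hsq : Real.sqrt 2 * Real.sqrt 2 = 2 := Real.mul_self_sqrt (by norm_num)
  have hcos0 : 0 ≤ cos x :=
    cos_nonneg_of_mem_Icc ⟨by linarith [pi_gt_three], by linarith [pi_gt_three]⟩
  have hcx := Real.cos_bound (x := x) (by rw [abs_of_nonneg hx0]; exact hx1)
  rw [abs_of_nonneg hx0] at hcx
  obtain ⟨θ, hθ⟩ : ∃ θ, θ = π / 4 - arcsin (cos x / Real.sqrt 2) := ⟨_, rfl⟩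
  have hδ : π / 8 - (1 / 2) * arcsin (cos x / Real.sqrt 2) = θ / 2 := by rw [hθ]; ring
  rw [hδ]
  have hs1 : (1 : ℝ) ≤ Real.sqrt 2 := Real.one_le_sqrt.mpr (by norm_num)
  have hy0 : 0 ≤ cos x / Real.sqrt 2 := by positivity
  have hy1 : cos x / Real.sqrt 2 ≤ 1 := by
    rw [div_le_one hs2]; linarith [cos_le_one x]
  have hθ1 : θ ≤ 1 := by
    have := arcsin_nonneg.mpr hy0
    linarith [pi_lt_four]
  have hθ0 : 0 ≤ θ := by
    have : arcsin (cos x / Real.sqrt 2) ≤ π / 4 := by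
      rw [arcsin_le_iff_le_sin ⟨by linarith, hy1⟩
        ⟨by linarith [pi_pos], by linarith [pi_pos]⟩, sin_pi_div_four, div_le_iff₀ hs2]
      linarith [cos_le_one x]
    linarith
  have hkey : cos θ - sin θ = cos x := by
    have h1 : sin (π / 4 - θ) = cos x / Real.sqrt 2 := by
      rw [hθ, sub_sub_cancel, sin_arcsin (by linarith) hy1]
    rw [sin_sub, sin_pi_div_four, cos_pi_div_four, eq_div_iff hs2.ne'] at h1
    linear_combination h1 - (cos θ - sin θ) / 2 * hsq
  have hst := Real.sin_bound (x := θ) (by rw [abs_of_nonneg hθ0]; exact hθ1)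
  have hct := Real.cos_bound (x := θ) (by rw [abs_of_nonneg hθ0]; exact hθ1)
  have hcd := Real.cos_bound (x := θ / 2) (by rw [abs_of_nonneg (by linarith)]; linarith)
  rw [abs_of_nonneg hθ0] at hst hct
  rw [abs_of_nonneg (by linarith : 0 ≤ θ / 2)] at hcd
  rw [abs_le] at *
  have p2 : θ ^ 2 ≤ θ := by nlinarith
  have p3 : θ ^ 3 ≤ θ ^ 2 := pow_le_pow_of_le_one hθ0 hθ1 (by norm_num)
  have p4 : θ ^ 4 ≤ θ ^ 3 := pow_le_pow_of_le_one hθ0 hθ1 (by norm_num)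
  have p5 : θ ^ 5 ≤ θ ^ 4 := pow_le_pow_of_le_one hθ0 hθ1 (by norm_num)
  have q5 : 0 ≤ θ ^ 5 := by positivity
  have q3 : 0 ≤ θ ^ 3 := by positivity
  have q4 : 0 ≤ θ ^ 4 := by positivity
  have hcx2 := one_sub_sq_div_two_le_cos (x := x)
  have hle : θ ≤ x ^ 2 := by
    have := cos_le_one θ
    linarith [hst.1, hst.2, hct.1, hct.2]
  have r2 : θ ^ 2 ≤ x ^ 4 := by
    calc θ ^ 2 ≤ (x ^ 2) ^ 2 := pow_le_pow_left₀ hθ0 hle 2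
      _ = x ^ 4 := by ring
  have r4 : θ ^ 4 ≤ x ^ 8 := by
    have := pow_le_pow_left₀ hθ0 hle 4
    calc θ ^ 4 ≤ (x ^ 2) ^ 4 := this
      _ = x ^ 8 := by ring
  have r8 : x ^ 8 ≤ x ^ 6 := pow_le_pow_of_le_one hx0 hx1 (by norm_num)
  have hx4 : 0 ≤ x ^ 4 := by positivity
  have hx6 : 0 ≤ x ^ 6 := by positivity
  have a1 : θ - x ^ 2 / 2 ≤ 2 * x ^ 4 := by linarith [hst.1, hst.2, hct.1, hct.2, hcx.1, hcx.2]
  have a2 : -(2 * x ^ 4) ≤ θ - x ^ 2 / 2 := by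
    linarith [hst.1, hst.2, hct.1, hct.2, hcx.1, hcx.2]
  have hw0 : 0 ≤ θ + x ^ 2 / 2 := by positivity
  have hw : θ + x ^ 2 / 2 ≤ 3 / 2 * x ^ 2 := by linarith
  have b0 : x ^ 4 * (θ + x ^ 2 / 2) ≤ x ^ 4 * (3 / 2 * x ^ 2) :=
    mul_le_mul_of_nonneg_left hw hx4
  have b1 := mul_le_mul_of_nonneg_right a1 hw0
  have b2 := mul_le_mul_of_nonneg_right a2 hw0
  have c1 : θ ^ 2 - x ^ 4 / 4 ≤ 3 * x ^ 6 := by linarith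
  have c2 : -(3 * x ^ 6) ≤ θ ^ 2 - x ^ 4 / 4 := by linarith
  have d1 : (θ / 2) ^ 4 = θ ^ 4 / 16 := by ring
  have d2 : (θ / 2) ^ 2 = θ ^ 2 / 4 := by ring
  rw [d1, d2] at hcd
  obtain ⟨hcd1, hcd2⟩ := hcd
  constructor <;> linarith

theorem gap_main (x : ℝ) (hx0 : 0 < x) (hx1 : x ≤ 1) (D : ℝ)
    (hD : |D - x ^ 4 / 32| ≤ 2 * x ^ 6) :
    |2 * (π / x) * sin (x / 2) * D - π * x ^ 4 / 32| ≤ 3 * π * x ^ 6 := by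
  obtain ⟨s, hs⟩ : ∃ s, s = 2 / x * sin (x / 2) := ⟨_, rfl⟩
  have hsx : sin (x / 2) = s * x / 2 := by rw [hs]; field_simp
  have hb := Real.sin_bound (x := x / 2) (by rw [abs_of_nonneg (by linarith)]; linarith)
  rw [abs_of_nonneg (by linarith : 0 ≤ x / 2), hsx, abs_le] at hb
  have x43 : x ^ 4 ≤ x ^ 3 := pow_le_pow_of_le_one hx0.le hx1 (by norm_num)
  have h1 : |s - 1| ≤ x ^ 2 := by
    rw [abs_le]
    have x3 : 0 < x ^ 3 := by positivity
    constructor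
    · refine le_of_mul_le_mul_right ?_ hx0
      nlinarith [hb.1, hb.2]
    · refine le_of_mul_le_mul_right ?_ hx0
      nlinarith [hb.1, hb.2]
  have hs1 : |s| ≤ 1 := by
    have h0 : 0 ≤ sin (x / 2) :=
      sin_nonneg_of_nonneg_of_le_pi (by linarith) (by linarith [pi_gt_three])
    have h2 : sin (x / 2) ≤ x / 2 := sin_le (by linarith)
    rw [hsx] at h0 h2
    rw [abs_le]; constructor <;> nlinarith
  have e : 2 * (π / x) * sin (x / 2) * D - π * x ^ 4 / 32
      = π * (s * (D - x ^ 4 / 32) + (s - 1) * (x ^ 4 / 32)) := by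
    rw [hsx]; field_simp; ring
  rw [e, abs_mul, abs_of_pos pi_pos]
  have h3 : |s * (D - x ^ 4 / 32) + (s - 1) * (x ^ 4 / 32)| ≤ 3 * x ^ 6 := by
    calc _ ≤ |s * (D - x ^ 4 / 32)| + |(s - 1) * (x ^ 4 / 32)| := abs_add_le _ _
      _ = |s| * |D - x ^ 4 / 32| + |s - 1| * (x ^ 4 / 32) := by
        rw [abs_mul, abs_mul, abs_of_nonneg (by positivity : 0 ≤ x ^ 4 / 32)]
      _ ≤ 1 * (2 * x ^ 6) + x ^ 2 * (x ^ 4 / 32) := by gcongr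
      _ ≤ 3 * x ^ 6 := by
        have : 0 ≤ x ^ 6 := by positivity
        nlinarith
  calc _ ≤ π * (3 * x ^ 6) := mul_le_mul_of_nonneg_left h3 pi_pos.le
    _ = _ := by ring

/-- Asymptotics of the perimeter gap for the polygon `Q_n`:
`2n sin(π/2n) − L(Q_n) = π⁵/(32 n⁴) + O(1/n⁶)` as `n → ∞`. -/
theorem perimeter_gap_Qn_asymptotics :
    (fun n : ℕ =>
        2 * n * sin (π / (2 * n)) -
          2 * n * sin (π / (2 * n)) *
            cos (π / 8 - (1 / 2) * arcsin (cos (π / n) / Real.sqrt 2)) -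
          π ^ 5 / (32 * (n : ℝ) ^ 4)) =O[atTop]
      (fun n : ℕ => 1 / (n : ℝ) ^ 6) := by
  refine IsBigO.of_bound (3 * π * π ^ 6) ?_
  filter_upwards [eventually_ge_atTop 4] with n hn
  have hn4 : (4 : ℝ) ≤ n := by exact_mod_cast hn
  have hn0 : (0 : ℝ) < n := by linarith
  have hx0 : 0 < π / n := by positivity
  have hx1 : π / n ≤ 1 := by rw [div_le_one hn0]; linarith [pi_lt_four]
  have h := gap_main (π / n) hx0 hx1 _ (gap_theta (π / n) hx0.le hx1)
  have e1 : π / (π / (n : ℝ)) = n := by field_simp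
  have e2 : π / (n : ℝ) / 2 = π / (2 * n) := by field_simp
  rw [e1, e2] at h
  rw [Real.norm_eq_abs, Real.norm_eq_abs, abs_of_pos (by positivity : 0 < 1 / (n : ℝ) ^ 6)]
  convert h using 1
  · congr 1
    have : π * (π / (n : ℝ)) ^ 4 / 32 = π ^ 5 / (32 * (n : ℝ) ^ 4) := by field_simp
    rw [this]; ring
  · field_simp
end

section
/- Define, for a positive integer n, W_Q(n) = cos(π/(2n) + π/8 − (1/2)·arcsin(cos(π/n)/√2)). Then, as n → ∞ over the positive integers, cos(π/(2n)) − W_Q(n) = π³/(8n³) + O(1/n⁴); that is, the function n ↦ cos(π/(2n)) − cos(π/(2n) + π/8 − (1/2)·arcsin(cos(π/n)/√2)) − π³/(8n³) is O(n⁻⁴) along the filter atTop. -/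
open Real Filter Asymptotics

lemma sin_sq_aux {e x : ℝ} (hx0 : 0 < x) (hx1 : x ≤ 1) (he0 : 0 ≤ e) (he1 : e ≤ π / 4)
    (h : cos e - sin e = cos x) : e ≤ x ^ 2 ∧ |e - x ^ 2 / 2| ≤ x ^ 4 := by
  have hpi := pi_pos
  have hpi4 : π ≤ 4 := pi_le_four
  have h1 : 2 / π * e ≤ sin e := mul_le_sin he0 (by linarith)
  have h2 := one_sub_sq_div_two_le_cos (x := x)
  have h3 := cos_le_one e
  have h4 : e ≤ x ^ 2 := by
    have h5 : e / 2 ≤ 2 / π * e := by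
      have : (1:ℝ) / 2 ≤ 2 / π := by
        rw [div_le_div_iff₀ (by norm_num) hpi]; linarith
      nlinarith
    linarith
  have hxx : x ^ 2 ≤ 1 := by nlinarith
  have he2 : e ^ 2 ≤ x ^ 4 := by nlinarith
  have he3 : e ^ 3 ≤ x ^ 4 := by
    have : e ^ 3 ≤ e ^ 2 := by nlinarith [sq_nonneg e]
    linarith
  have hs1 : sin e ≤ e := sin_le he0
  have hs2 : e - e ^ 3 / 4 ≤ sin e := by
    rcases he0.eq_or_lt with h0 | h0
    · simp [← h0]
    · have h6 := (sin_gt_sub_cube h0).le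
      have h7 := pow_pos h0 3
      linarith
  have hc := one_sub_sq_div_two_le_cos (x := e)
  have hb := abs_le.1 (cos_bound (x := x) (by rw [abs_of_pos hx0]; exact hx1))
  rw [abs_of_pos hx0] at hb
  have hx4 : 0 ≤ x ^ 4 := by positivity
  refine ⟨h4, abs_le.2 ⟨?_, ?_⟩⟩ <;> linarith [hb.1, hb.2]

lemma gap_aux {x : ℝ} (hx0 : 0 < x) (hx1 : x ≤ 1) :
    |cos (x / 2) - cos (x / 2 + π / 8 - (1 / 2) * arcsin (cos x / Real.sqrt 2)) - x ^ 3 / 8|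
      ≤ 10 * x ^ 4 := by
  have hs : (0:ℝ) < Real.sqrt 2 := by positivity
  have hss : Real.sqrt 2 * Real.sqrt 2 = 2 := mul_self_sqrt (by norm_num)
  have hpi := pi_pos
  have hcx : 0 ≤ cos x := cos_nonneg_of_mem_Icc ⟨by linarith, by linarith [pi_gt_three]⟩
  have hy0 : 0 ≤ cos x / Real.sqrt 2 := by positivity
  have hy1 : cos x / Real.sqrt 2 ≤ Real.sqrt 2 / 2 := by
    rw [div_le_div_iff₀ hs (by norm_num)]
    linarith [cos_le_one x]
  have hy2 : Real.sqrt 2 / 2 ≤ 1 := by nlinarith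
  have hsin := sin_arcsin (x := cos x / Real.sqrt 2) (by linarith) (by linarith)
  have ha0 := arcsin_nonneg.2 hy0
  have ha1 : arcsin (cos x / Real.sqrt 2) ≤ π / 4 := by
    rw [arcsin_le_iff_le_sin' ⟨by linarith, by linarith⟩, sin_pi_div_four]
    exact hy1
  obtain ⟨e, he⟩ : ∃ e, e = π / 4 - arcsin (cos x / Real.sqrt 2) := ⟨_, rfl⟩
  have hae : arcsin (cos x / Real.sqrt 2) = π / 4 - e := by linarith
  rw [hae] at hsin ha0 ha1 ⊢
  have hrel : cos e - sin e = cos x := by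
    rw [sin_sub, sin_pi_div_four, cos_pi_div_four, eq_div_iff hs.ne'] at hsin
    linear_combination hsin - (cos e - sin e) / 2 * hss
  obtain ⟨h1, h2⟩ := sin_sq_aux hx0 hx1 (by linarith) (by linarith) hrel
  obtain ⟨h2, h3⟩ := abs_le.1 h2
  have harg : x / 2 + π / 8 - 1 / 2 * (π / 4 - e) = x / 2 + e / 2 := by ring
  rw [harg, cos_add]
  obtain ⟨d, hd⟩ : ∃ d, d = e / 2 := ⟨_, rfl⟩
  rw [← hd]
  have hd0 : 0 ≤ d := by linarith
  have hxx : x ^ 2 ≤ 1 := by nlinarith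
  have hd1 : d ≤ x ^ 2 := by linarith
  have hd2 : d ^ 2 ≤ x ^ 4 := by nlinarith
  have hd3 : d ^ 3 ≤ x ^ 4 := by
    have : d ^ 3 ≤ d ^ 2 := by nlinarith [sq_nonneg d]
    linarith
  have hs1 : sin d ≤ d := sin_le hd0
  have hs2 : d - d ^ 3 / 4 ≤ sin d := by
    rcases hd0.eq_or_lt with h0 | h0
    · simp [← h0]
    · have h6 := (sin_gt_sub_cube h0).le
      have h7 := pow_pos h0 3
      linarith
  have hc := one_sub_sq_div_two_le_cos (x := d)
  have hc1 := cos_le_one d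
  have hsd0 : 0 ≤ sin d := sin_nonneg_of_nonneg_of_le_pi hd0 (by linarith [pi_gt_three])
  have hA1 : sin (x / 2) ≤ x / 2 := sin_le (by linarith)
  have hA2 := (sin_gt_sub_cube (x := x / 2) (by linarith)).le
  have hC1 := cos_le_one (x / 2)
  have hC0 : 0 ≤ cos (x / 2) :=
    cos_nonneg_of_mem_Icc ⟨by linarith, by linarith [pi_gt_three]⟩
  have hx4 : 0 ≤ x ^ 4 := by positivity
  have hx5 : x ^ 5 ≤ x ^ 4 := by nlinarith
  -- the cosine part
  have p1 : 0 ≤ cos (x / 2) * (1 - cos d) := mul_nonneg hC0 (by linarith)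
  have p2 : cos (x / 2) * (1 - cos d) ≤ 1 * (1 - cos d) :=
    mul_le_mul_of_nonneg_right hC1 (by linarith)
  -- the sine part
  have q1 : sin (x / 2) * sin d ≤ x / 2 * sin d := mul_le_mul_of_nonneg_right hA1 hsd0
  have q2 : (x / 2 - (x / 2) ^ 3 / 6) * sin d ≤ sin (x / 2) * sin d :=
    mul_le_mul_of_nonneg_right hA2 hsd0
  have q3 : x / 2 * sin d ≤ x / 2 * (x ^ 2 / 4 + x ^ 4) :=
    mul_le_mul_of_nonneg_left (by linarith) (by linarith)
  have q4 : x / 2 * (x ^ 2 / 4 - x ^ 4) ≤ x / 2 * sin d :=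
    mul_le_mul_of_nonneg_left (by linarith) (by linarith)
  have q5 : x ^ 3 * sin d ≤ x ^ 3 * x ^ 2 :=
    mul_le_mul_of_nonneg_left (by linarith) (by positivity)
  refine abs_le.2 ⟨?_, ?_⟩ <;> ring_nf at * <;> linarith

/-- Asymptotics of the width gap for the polygon `Q_n`:
`cos(π/2n) − W(Q_n) = π³/(8 n³) + O(1/n⁴)` as `n → ∞`. -/
theorem width_gap_Qn_asymptotics :
    (fun n : ℕ =>
        cos (π / (2 * n)) -
          cos (π / (2 * n) + π / 8 - (1 / 2) * arcsin (cos (π / n) / Real.sqrt 2)) -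
          π ^ 3 / (8 * (n : ℝ) ^ 3)) =O[atTop]
      (fun n : ℕ => 1 / (n : ℝ) ^ 4) := by
  refine IsBigO.of_bound (10 * π ^ 4) ?_
  filter_upwards [eventually_ge_atTop 4] with n hn
  have hn' : (4:ℝ) ≤ n := by exact_mod_cast hn
  have hn0 : (0:ℝ) < n := by linarith
  have h := gap_aux (x := π / n) (by positivity)
    (by rw [div_le_one hn0]; linarith [pi_le_four])
  have e1 : π / n / 2 = π / (2 * n) := by field_simp
  have e2 : (π / n) ^ 3 / 8 = π ^ 3 / (8 * (n:ℝ) ^ 3) := by field_simp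
  have e3 : 10 * (π / n) ^ 4 = 10 * π ^ 4 * (1 / (n:ℝ) ^ 4) := by field_simp
  rw [e1, e2, e3] at h
  rw [Real.norm_eq_abs, Real.norm_of_nonneg (by positivity : (0:ℝ) ≤ 1 / (n:ℝ) ^ 4)]
  exact h
end

section
/- Define γ(n) = π/4 − arcsin(cos(π/n)/√2) for positive integers n. Then, as n → ∞ over the positive integers, γ(n) = π²/(2n²) − π⁴/(6n⁴) + O(1/n⁶); that is, the function n ↦ π/4 − arcsin(cos(π/n)/√2) − π²/(2n²) + π⁴/(6n⁴) is O(n⁻⁶) along the filter atTop. -/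
open Real Filter Asymptotics

lemma cos_six (x : ℝ) (h0 : 0 ≤ x) (h1 : x ≤ 1) :
    |cos x - (1 - x ^ 2 / 2 + x ^ 4 / 24)| ≤ x ^ 6 := by
  have hn : ‖(x * Complex.I : ℂ)‖ = x := by simp [abs_of_nonneg h0]
  have h := Complex.exp_bound (x := x * Complex.I) (by rw [hn]; exact h1) (n := 6) (by norm_num)
  have hre := (Complex.abs_re_le_norm _).trans h
  rw [hn] at hre
  have e : (Complex.exp (x * Complex.I) -
      ∑ m ∈ Finset.range 6, (x * Complex.I : ℂ) ^ m / (m.factorial : ℂ)).re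
      = cos x - (1 - x ^ 2 / 2 + x ^ 4 / 24) := by
    have e2 : (∑ m ∈ Finset.range 6, (x * Complex.I : ℂ) ^ m / (m.factorial : ℂ))
      = ((1 - x ^ 2 / 2 + x ^ 4 / 24 : ℝ) : ℂ) + ((x - x ^ 3 / 6 + x ^ 5 / 120 : ℝ) : ℂ) * Complex.I := by
      have hI3 : Complex.I ^ 3 = -Complex.I := Complex.I_pow_three
      have hI4 : Complex.I ^ 4 = 1 := Complex.I_pow_four
      have hI5 : Complex.I ^ 5 = Complex.I := by rw [pow_succ, hI4, one_mul]
      simp only [Finset.sum_range_succ, Finset.sum_range_zero, mul_pow, hI3, hI4, hI5,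
        Complex.I_sq, Nat.factorial]
      push_cast
      ring
    rw [e2, Complex.sub_re, Complex.exp_ofReal_mul_I_re, Complex.add_re, Complex.re_ofReal_mul,
      Complex.ofReal_re, Complex.I_re]
    ring
  rw [e] at hre
  refine hre.trans ?_
  have : (0:ℝ) ≤ x ^ 6 := by positivity
  norm_num [Nat.factorial]
  linarith

lemma one_le_aux {s c : ℝ} (hs : 0 ≤ s) (hc : 0 ≤ c) (h : s ^ 2 + c ^ 2 = 1) : 1 ≤ s + c := by
  nlinarith [mul_nonneg hs hc]

set_option maxHeartbeats 1000000 in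
lemma gam_bound (x : ℝ) (h0 : 0 ≤ x) (h1 : x ≤ 1) :
    |π / 4 - arcsin (cos x / √2) - x ^ 2 / 2 + x ^ 4 / 6| ≤ 4 * x ^ 6 := by
  have hpi := Real.pi_gt_three
  have hpi4 := Real.pi_lt_four
  have hs2 : (0:ℝ) < √2 := by positivity
  have hs : √2 * √2 = 2 := Real.mul_self_sqrt (by norm_num)
  have hs1 : 1 ≤ √2 := by nlinarith
  have hc0 : 0 ≤ cos x := cos_nonneg_of_mem_Icc ⟨by linarith, by linarith⟩
  have hc1 := cos_le_one x
  have hle : cos x / √2 ≤ 1 / √2 := by gcongr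
  have hle1 : 1 / √2 ≤ 1 := by rw [div_le_one hs2]; exact hs1
  have hnn : 0 ≤ cos x / √2 := by positivity
  set a := arcsin (cos x / √2) with ha
  have hsa : sin a = cos x / √2 := sin_arcsin (by linarith) (by linarith)
  have ha0 : 0 ≤ a := arcsin_nonneg.2 hnn
  have ha1 : a ≤ π / 4 := by
    have hh : 1 / √2 = sin (π / 4) := by
      rw [sin_pi_div_four]; field_simp; nlinarith
    have : a ≤ arcsin (1 / √2) := monotone_arcsin hle
    rwa [hh, arcsin_sin (by linarith) (by linarith)] at this
  set c := π / 4 - a with hcdef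
  have hF : cos c - sin c = cos x := by
    have : a = π / 4 - c := by rw [hcdef]; ring
    rw [this, sin_sub, sin_pi_div_four, cos_pi_div_four] at hsa
    field_simp at hsa
    nlinarith
  set g := x ^ 2 / 2 - x ^ 4 / 6 with hg
  have hx2 : x ^ 2 ≤ 1 := by nlinarith
  have hx20 : 0 ≤ x ^ 2 := by positivity
  have hg0 : 0 ≤ g := by nlinarith
  have hg1 : g ≤ x ^ 2 / 2 := by have : 0 ≤ x ^ 4 := by positivity
                                 linarith
  have hx6 : 0 ≤ x ^ 6 := by positivity
  have hg3 : g ^ 3 ≤ x ^ 6 / 8 := by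
    calc g ^ 3 ≤ (x ^ 2 / 2) ^ 3 := by gcongr
      _ = _ := by ring
  have hg30 : 0 ≤ g ^ 3 := by positivity
  have hg4 : g ^ 4 ≤ g ^ 3 := pow_le_pow_of_le_one hg0 (by linarith) (by norm_num)
  have hg5 : g ^ 5 ≤ g ^ 3 := pow_le_pow_of_le_one hg0 (by linarith) (by norm_num)
  have hcg := Real.cos_bound (x := g) (by rw [abs_of_nonneg hg0]; linarith)
  have hsg := Real.sin_bound (x := g) (by rw [abs_of_nonneg hg0]; linarith)
  rw [abs_of_nonneg hg0] at hcg hsg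
  have hcx := cos_six x h0 h1
  have hpoly : -g ^ 2 / 2 - g + x ^ 2 / 2 - x ^ 4 / 24 = x ^ 6 / 12 - x ^ 8 / 72 := by
    rw [hg]; ring
  have hx8 : x ^ 8 ≤ x ^ 6 := pow_le_pow_of_le_one h0 h1 (by norm_num)
  have hx80 : 0 ≤ x ^ 8 := by positivity
  have hD : |(cos g - sin g) - (cos c - sin c)| ≤ 2 * x ^ 6 := by
    rw [hF]
    rw [abs_le] at *
    constructor <;> linarith [hcg.1, hcg.2, hsg.1, hsg.2, hcx.1, hcx.2]
  have hid : (cos g - sin g) - (cos c - sin c)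
      = 2 * sin ((c - g) / 2) * (sin ((c + g) / 2) + cos ((c + g) / 2)) := by
    have e1 : g = (c + g) / 2 - (c - g) / 2 := by ring
    have e2 : c = (c + g) / 2 + (c - g) / 2 := by ring
    generalize (c + g) / 2 = m at *
    generalize (c - g) / 2 = d at *
    rw [e1, e2, cos_sub, sin_sub, cos_add, sin_add]
    ring
  have hm0 : 0 ≤ (c + g) / 2 := by linarith
  have hm1 : (c + g) / 2 ≤ π / 2 := by linarith
  have hS0 : 0 ≤ sin ((c + g) / 2) := sin_nonneg_of_nonneg_of_le_pi hm0 (by linarith)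
  have hC0 : 0 ≤ cos ((c + g) / 2) := cos_nonneg_of_mem_Icc ⟨by linarith, by linarith⟩
  have hSC : 1 ≤ sin ((c + g) / 2) + cos ((c + g) / 2) := by
    exact one_le_aux hS0 hC0 (sin_sq_add_cos_sq ((c + g) / 2))
  have hd : |(c - g) / 2| ≤ π / 2 := by rw [abs_le]; constructor <;> linarith
  have hj := Real.mul_abs_le_abs_sin hd
  rw [hid, abs_mul, abs_mul, abs_of_nonneg (by linarith : 0 ≤ sin ((c + g) / 2) + cos ((c + g) / 2)),
    abs_two] at hD
  have hsd : |sin ((c - g) / 2)| ≤ x ^ 6 := by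
    have := le_mul_of_one_le_right (abs_nonneg (sin ((c - g) / 2))) hSC
    linarith
  have h2 : 1 / 2 ≤ 2 / π := by rw [div_le_div_iff₀ (by norm_num) (by linarith)]; linarith
  have h3 : 1 / 2 * |(c - g) / 2| ≤ x ^ 6 :=
    (mul_le_mul_of_nonneg_right h2 (abs_nonneg _)).trans (hj.trans hsd)
  rw [abs_div, abs_two] at h3
  have : c - x ^ 2 / 2 + x ^ 4 / 6 = c - g := by rw [hg]; ring
  rw [this]
  linarith

/-- Asymptotics of `γ(n) = π/4 − arcsin(cos(π/n)/√2)`: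
`γ(n) = π²/(2n²) − π⁴/(6n⁴) + O(1/n⁶)` as `n → ∞`. -/
theorem gamma_asymptotics :
    (fun n : ℕ =>
        π / 4 - arcsin (cos (π / n) / Real.sqrt 2) -
          π ^ 2 / (2 * (n : ℝ) ^ 2) + π ^ 4 / (6 * (n : ℝ) ^ 4)) =O[atTop]
      (fun n : ℕ => 1 / (n : ℝ) ^ 6) := by
  refine IsBigO.of_bound (4 * π ^ 6) ?_
  filter_upwards [eventually_ge_atTop 4] with n hn
  have hn' : (4:ℝ) ≤ n := by exact_mod_cast hn
  have hpos : (0:ℝ) < n := by linarith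
  have h := gam_bound (π / n) (by positivity)
    (by rw [div_le_one hpos]; linarith [Real.pi_lt_four])
  have e1 : (π / n) ^ 2 / 2 = π ^ 2 / (2 * (n : ℝ) ^ 2) := by field_simp
  have e2 : (π / n) ^ 4 / 6 = π ^ 4 / (6 * (n : ℝ) ^ 4) := by field_simp
  rw [e1, e2] at h
  rw [Real.norm_eq_abs, Real.norm_eq_abs, abs_of_nonneg (by positivity : 0 ≤ 1 / (n:ℝ) ^ 6)]
  refine h.trans (le_of_eq ?_)
  rw [div_pow]; ring
end

section
/- Define, for a positive integer n, f₁(n) = ((4n−4)/3)·sin(π/(2n−2)) + ((2n+4)/3)·sin(π/(2n+4)) and f₂(n) = ((4n+4)/3)·sin(π/(2n+2)) + ((2n−4)/3)·sin(π/(2n−4)). Then, as n → ∞ over the positive integers, both 2n·sin(π/(2n)) − f₁(n) = π³/(4n⁴) + O(1/n⁵) and 2n·sin(π/(2n)) − f₂(n) = π³/(4n⁴) + O(1/n⁵); that is, for i = 1, 2 the function n ↦ 2n·sin(π/(2n)) − f_i(n) − π³/(4n⁴) is O(n⁻⁵) along the filter atTop. -/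
open Real Filter Asymptotics

lemma sin_bound_six {x : ℝ} (hx : |x| ≤ 1) :
    |sin x - (x - x ^ 3 / 6 + x ^ 5 / 120)| ≤ |x| ^ 6 := by
  have h := Complex.exp_bound (x := (x : ℂ) * Complex.I) (by simpa using hx) (n := 6) (by norm_num)
  have h1 := (Complex.abs_im_le_norm _).trans h
  have e : (Complex.exp ((x : ℂ) * Complex.I) -
      ∑ m ∈ Finset.range 6, ((x : ℂ) * Complex.I) ^ m / (m.factorial : ℂ)).im
      = sin x - (x - x ^ 3 / 6 + x ^ 5 / 120) := by
    have e2 : ∑ m ∈ Finset.range 6, ((x : ℂ) * Complex.I) ^ m / (m.factorial : ℂ)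
      = ((1 - x ^ 2 / 2 + x ^ 4 / 24 : ℝ) : ℂ)
        + ((x - x ^ 3 / 6 + x ^ 5 / 120 : ℝ) : ℂ) * Complex.I := by
      have h2 : Complex.I ^ 2 = -1 := Complex.I_sq
      have h3 : Complex.I ^ 3 = -Complex.I := Complex.I_pow_three
      have h4 : Complex.I ^ 4 = 1 := Complex.I_pow_four
      have h5 : Complex.I ^ 5 = Complex.I := by rw [pow_succ, h4, one_mul]
      simp only [Finset.sum_range_succ, Finset.sum_range_zero, mul_pow, h2, h3, h4, h5,
        Nat.factorial]
      push_cast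
      ring
    rw [e2, Complex.sub_im, Complex.exp_ofReal_mul_I_im, Complex.add_im, Complex.ofReal_im,
      Complex.im_ofReal_mul, Complex.I_im]
    ring
  rw [e] at h1
  refine h1.trans ?_
  have : ‖(x : ℂ) * Complex.I‖ = |x| := by simp
  rw [this]
  have h6 : (0:ℝ) ≤ |x| ^ 6 := by positivity
  calc _ ≤ |x| ^ 6 * 1 := by
        apply mul_le_mul_of_nonneg_left _ h6
        norm_num [Nat.factorial]
    _ = _ := mul_one _

lemma term_bound (b : ℝ) (hb : |b| ≤ 2) {x : ℝ} (hx : 6 ≤ x) :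
    |(2 * x + 2 * b) * sin (π / (2 * x + 2 * b)) -
      (π - π ^ 3 / 24 * (1 / x ^ 2 - 2 * b / x ^ 3 + 3 * b ^ 2 / x ^ 4)
        + π ^ 5 / 1920 * (1 / x ^ 4))| ≤
      (π ^ 6 + π ^ 3 / 24 * 200 + π ^ 5 / 1920 * 1000) * (1 / x ^ 5) := by
  have hπ := pi_pos
  obtain ⟨hb1, hb2⟩ := abs_le.1 hb
  have hx0 : 0 < x := by linarith
  have hy : 0 < x + b := by linarith
  have hyx : x / 2 ≤ x + b := by linarith
  have hm : 0 < 2 * x + 2 * b := by linarith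
  have hmx : x ≤ 2 * x + 2 * b := by linarith
  have A : |(2 * x + 2 * b) * sin (π / (2 * x + 2 * b)) -
      (π - π ^ 3 / 24 * (1 / (x + b) ^ 2) + π ^ 5 / 1920 * (1 / (x + b) ^ 4))|
      ≤ π ^ 6 * (1 / x ^ 5) := by
    have ht : |π / (2 * x + 2 * b)| ≤ 1 := by
      rw [abs_of_pos (by positivity), div_le_one hm]
      linarith [pi_lt_four]
    have h := sin_bound_six ht
    have e : (2 * x + 2 * b) * sin (π / (2 * x + 2 * b)) -
      (π - π ^ 3 / 24 * (1 / (x + b) ^ 2) + π ^ 5 / 1920 * (1 / (x + b) ^ 4))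
      = (2 * x + 2 * b) * (sin (π / (2 * x + 2 * b)) - (π / (2 * x + 2 * b)
        - (π / (2 * x + 2 * b)) ^ 3 / 6 + (π / (2 * x + 2 * b)) ^ 5 / 120)) := by
      have : 2 * x + 2 * b = 2 * (x + b) := by ring
      rw [this]
      field_simp
      ring
    rw [e, abs_mul, abs_of_pos hm]
    calc _ ≤ (2 * x + 2 * b) * |π / (2 * x + 2 * b)| ^ 6 := by gcongr
      _ = π ^ 6 * (1 / (2 * x + 2 * b) ^ 5) := by
        rw [abs_of_pos (by positivity)]
        field_simp
      _ ≤ _ := by gcongr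
  have B : |1 / (x + b) ^ 2 - (1 / x ^ 2 - 2 * b / x ^ 3 + 3 * b ^ 2 / x ^ 4)|
      ≤ 200 * (1 / x ^ 5) := by
    have e : 1 / (x + b) ^ 2 - (1 / x ^ 2 - 2 * b / x ^ 3 + 3 * b ^ 2 / x ^ 4)
      = -(4 * b ^ 3 * x + 3 * b ^ 4) / (x ^ 4 * (x + b) ^ 2) := by
      field_simp
      ring
    rw [e, abs_div, abs_neg, abs_of_pos (show 0 < x ^ 4 * (x + b) ^ 2 by positivity)]
    have hn : |4 * b ^ 3 * x + 3 * b ^ 4| ≤ 50 * x := by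
      calc _ ≤ |4 * b ^ 3 * x| + |3 * b ^ 4| := abs_add_le _ _
        _ = 4 * |b| ^ 3 * x + 3 * |b| ^ 4 := by
          simp [abs_mul, abs_pow, abs_of_pos hx0]
        _ ≤ 4 * 2 ^ 3 * x + 3 * 2 ^ 4 := by gcongr
        _ ≤ _ := by linarith
    calc _ ≤ 50 * x / (x ^ 4 * (x / 2) ^ 2) := by gcongr
      _ = _ := by field_simp; norm_num
  have C : |1 / (x + b) ^ 4 - 1 / x ^ 4| ≤ 1000 * (1 / x ^ 5) := by
    have e : 1 / (x + b) ^ 4 - 1 / x ^ 4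
      = -(b * (4 * x ^ 3 + 6 * b * x ^ 2 + 4 * b ^ 2 * x + b ^ 3)) / (x ^ 4 * (x + b) ^ 4) := by
      field_simp
      ring
    rw [e, abs_div, abs_neg, abs_of_pos (show 0 < x ^ 4 * (x + b) ^ 4 by positivity)]
    have hn : |b * (4 * x ^ 3 + 6 * b * x ^ 2 + 4 * b ^ 2 * x + b ^ 3)| ≤ 30 * x ^ 3 := by
      rw [abs_mul]
      have h2 : |4 * x ^ 3 + 6 * b * x ^ 2 + 4 * b ^ 2 * x + b ^ 3| ≤
          4 * x ^ 3 + 6 * 2 * x ^ 2 + 4 * 2 ^ 2 * x + 2 ^ 3 := by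
        calc _ ≤ |4 * x ^ 3| + |6 * b * x ^ 2| + |4 * b ^ 2 * x| + |b ^ 3| :=
              (abs_add_le _ _).trans (by gcongr; exact (abs_add_le _ _).trans (by
                gcongr; exact abs_add_le _ _))
          _ = 4 * x ^ 3 + 6 * |b| * x ^ 2 + 4 * |b| ^ 2 * x + |b| ^ 3 := by
            simp [abs_mul, abs_pow, abs_of_pos hx0]
          _ ≤ _ := by gcongr
      calc _ ≤ 2 * (4 * x ^ 3 + 6 * 2 * x ^ 2 + 4 * 2 ^ 2 * x + 2 ^ 3) := by gcongr
        _ ≤ _ := by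
          have a1 : 6 * x ≤ x ^ 2 := by nlinarith
          have a2 : 6 * x ^ 2 ≤ x ^ 3 := by nlinarith [sq_nonneg x]
          nlinarith
    calc _ ≤ 30 * x ^ 3 / (x ^ 4 * (x / 2) ^ 4) := by gcongr
      _ = 480 * (1 / x ^ 5) := by field_simp; norm_num
      _ ≤ _ := by gcongr; norm_num
  have p3 : 0 < π ^ 3 / 24 := by positivity
  have p5 : 0 < π ^ 5 / 1920 := by positivity
  have B' := mul_le_mul_of_nonneg_left B p3.le
  have C' := mul_le_mul_of_nonneg_left C p5.le
  rw [← abs_of_pos p3, ← abs_mul, abs_of_pos p3] at B'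
  rw [← abs_of_pos p5, ← abs_mul, abs_of_pos p5] at C'
  rw [abs_le] at *
  constructor <;> linarith

lemma term_isBigO (b : ℝ) (hb : |b| ≤ 2) :
    (fun n : ℕ => (2 * (n : ℝ) + 2 * b) * sin (π / (2 * (n : ℝ) + 2 * b)) -
      (π - π ^ 3 / 24 * (1 / (n : ℝ) ^ 2 - 2 * b / (n : ℝ) ^ 3 + 3 * b ^ 2 / (n : ℝ) ^ 4)
        + π ^ 5 / 1920 * (1 / (n : ℝ) ^ 4))) =O[atTop] (fun n : ℕ => 1 / (n : ℝ) ^ 5) := by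
  refine IsBigO.of_bound (π ^ 6 + π ^ 3 / 24 * 200 + π ^ 5 / 1920 * 1000) ?_
  filter_upwards [eventually_ge_atTop 6] with n hn
  have hx : (6 : ℝ) ≤ n := by exact_mod_cast hn
  have := term_bound b hb hx
  rw [norm_eq_abs, norm_eq_abs, abs_of_nonneg (show 0 ≤ 1 / (n : ℝ) ^ 5 by positivity)]
  exact this

/-- Asymptotics of the perimeter gap for the Tamvakis polygons `T_n` in both cases
`n ≡ 1 (mod 3)` and `n ≡ 2 (mod 3)`:
`2n sin(π/2n) − L(T_n) = π³/(4n⁴) + O(1/n⁵)` as `n → ∞`. -/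
theorem perimeter_gap_Tn_asymptotics :
    ((fun n : ℕ =>
        2 * n * sin (π / (2 * n)) -
          (((4 * (n : ℝ) - 4) / 3) * sin (π / (2 * (n : ℝ) - 2)) +
            ((2 * (n : ℝ) + 4) / 3) * sin (π / (2 * (n : ℝ) + 4))) -
          π ^ 3 / (4 * (n : ℝ) ^ 4)) =O[atTop]
      (fun n : ℕ => 1 / (n : ℝ) ^ 5)) ∧
    ((fun n : ℕ =>
        2 * n * sin (π / (2 * n)) -
          (((4 * (n : ℝ) + 4) / 3) * sin (π / (2 * (n : ℝ) + 2)) +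
            ((2 * (n : ℝ) - 4) / 3) * sin (π / (2 * (n : ℝ) - 4))) -
          π ^ 3 / (4 * (n : ℝ) ^ 4)) =O[atTop]
      (fun n : ℕ => 1 / (n : ℝ) ^ 5)) := by
  have h0 := term_isBigO 0 (by norm_num)
  constructor
  · have h1 := term_isBigO (-1) (by norm_num)
    have h2 := term_isBigO 2 (by norm_num)
    refine ((h0.sub (h1.const_mul_left (2 / 3))).sub (h2.const_mul_left (1 / 3))).congr_left ?_
    intro n
    rw [show 2 * (n : ℝ) + 2 * 0 = 2 * n by ring, show 2 * (n : ℝ) + 2 * (-1) = 2 * n - 2 by ring,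
      show 2 * (n : ℝ) + 2 * 2 = 2 * n + 4 by ring]
    ring
  · have h1 := term_isBigO 1 (by norm_num)
    have h2 := term_isBigO (-2) (by norm_num)
    refine ((h0.sub (h1.const_mul_left (2 / 3))).sub (h2.const_mul_left (1 / 3))).congr_left ?_
    intro n
    rw [show 2 * (n : ℝ) + 2 * 0 = 2 * n by ring, show 2 * (n : ℝ) + 2 * 1 = 2 * n + 2 by ring,
      show 2 * (n : ℝ) + 2 * (-2) = 2 * n - 4 by ring]
    ring
end

section
/- Define, for an integer n ≥ 2, g(n) = (2n−2)·sin(π/(2n−2)) + 4·sin(π/(4n−4)) − 2·sin(π/(2n−2)). Then, as n → ∞ over the integers, 2n·sin(π/(2n)) − g(n) = 5π³/(96n³) + O(1/n⁴); that is, the function n ↦ 2n·sin(π/(2n)) − (2n−2)·sin(π/(2n−2)) − 4·sin(π/(4n−4)) + 2·sin(π/(2n−2)) − 5π³/(96n³) is O(n⁻⁴) along the filter atTop. -/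
open Real Filter Asymptotics

lemma aux_sin_s17 (k : ℝ) (hk : 4 ≤ k) :
    |sin (π / k) - (π / k - (π / k) ^ 3 / 6)| ≤ π ^ 5 / 100 / k ^ 5 := by
  have hp := Real.pi_pos
  have h4 := Real.pi_le_four
  have h0 : 0 ≤ π / k := by positivity
  have h1 : π / k ≤ 1 := by
    rw [div_le_one (by linarith)]; linarith
  have h := Real.sin_bound (x := π / k) (by rw [abs_of_nonneg h0]; exact h1)
  rw [abs_of_nonneg h0] at h
  refine h.trans (le_of_eq ?_)
  rw [div_pow]; ring

lemma aux_poly_s17 (m : ℝ) (hm : 3 ≤ m) :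
    |(2 * (m + 1) * (π / (2 * (m + 1)) - (π / (2 * (m + 1))) ^ 3 / 6) -
      2 * m * (π / (2 * m) - (π / (2 * m)) ^ 3 / 6) -
      4 * (π / (4 * m) - (π / (4 * m)) ^ 3 / 6) +
      2 * (π / (2 * m) - (π / (2 * m)) ^ 3 / 6)) - 5 * π ^ 3 / (96 * (m + 1) ^ 3)|
      ≤ π ^ 3 / m ^ 4 := by
  have hm0 : 0 < m := by linarith
  have hp := Real.pi_pos
  have e : (2 * (m + 1) * (π / (2 * (m + 1)) - (π / (2 * (m + 1))) ^ 3 / 6) -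
      2 * m * (π / (2 * m) - (π / (2 * m)) ^ 3 / 6) -
      4 * (π / (4 * m) - (π / (4 * m)) ^ 3 / 6) +
      2 * (π / (2 * m) - (π / (2 * m)) ^ 3 / 6)) - 5 * π ^ 3 / (96 * (m + 1) ^ 3)
      = π ^ 3 * ((3 * m ^ 2 - 5 * m - 3) / (96 * m ^ 3 * (m + 1) ^ 3)) := by
    field_simp
    ring
  have hpos : 0 ≤ 3 * m ^ 2 - 5 * m - 3 := by nlinarith
  rw [e, abs_of_nonneg (by positivity), div_eq_mul_inv (π ^ 3)]
  apply mul_le_mul_of_nonneg_left _ (by positivity)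
  rw [← one_div, div_le_div_iff₀ (by positivity) (by positivity)]
  have h1 : (3 * m ^ 2 - 5 * m - 3) * m ^ 4 ≤ 3 * m ^ 2 * m ^ 4 :=
    mul_le_mul_of_nonneg_right (by linarith) (by positivity)
  have h2 : 96 * m ^ 3 * m ^ 3 ≤ 96 * m ^ 3 * (m + 1) ^ 3 := by gcongr; linarith
  have h3 : 0 ≤ m ^ 6 := by positivity
  nlinarith

/-- Asymptotics of the perimeter gap for the polygon `R_{n-1}^+`:
`2n sin(π/2n) − L(R_{n-1}^+) = 5π³/(96 n³) + O(1/n⁴)` as `n → ∞`. -/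
theorem perimeter_gap_Rplus_asymptotics :
    (fun n : ℕ =>
        2 * n * sin (π / (2 * n)) -
          (2 * (n : ℝ) - 2) * sin (π / (2 * (n : ℝ) - 2)) -
          4 * sin (π / (4 * (n : ℝ) - 4)) + 2 * sin (π / (2 * (n : ℝ) - 2)) -
          5 * π ^ 3 / (96 * (n : ℝ) ^ 3)) =O[atTop]
      (fun n : ℕ => 1 / (n : ℝ) ^ 4) := by
  refine IsBigO.of_bound (16 * (π ^ 3 + 10 * (π ^ 5 / 100))) ?_
  filter_upwards [eventually_ge_atTop 4] with n hn
  have hn' : (4 : ℝ) ≤ n := by exact_mod_cast hn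
  obtain ⟨m, hm⟩ : ∃ m : ℝ, (n : ℝ) = m + 1 := ⟨n - 1, by ring⟩
  rw [hm] at hn' ⊢
  have hm3 : 3 ≤ m := by linarith
  have hm0 : 0 < m := by linarith
  have hp := Real.pi_pos
  rw [show 2 * (m + 1) - 2 = 2 * m by ring, show 4 * (m + 1) - 4 = 4 * m by ring]
  have hP := aux_poly_s17 m hm3
  have key : ∀ c k : ℝ, 0 ≤ c → c ≤ 2 * k → m ≤ k → 4 ≤ k → c ≤ k →
      |c * sin (π / k) - c * (π / k - (π / k) ^ 3 / 6)| ≤ π ^ 5 / 100 / m ^ 4 := by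
    intro c k hc _ hmk hk hck
    have h := aux_sin_s17 k hk
    have hk0 : 0 < k := by linarith
    rw [← mul_sub, abs_mul, abs_of_nonneg hc]
    calc c * _ ≤ k * (π ^ 5 / 100 / k ^ 5) := by gcongr
      _ = π ^ 5 / 100 / k ^ 4 := by field_simp
      _ ≤ _ := by gcongr
  have h1 := key (2 * (m + 1)) (2 * (m + 1)) (by linarith) (by linarith) (by linarith)
    (by linarith) (by linarith)
  have h2 := key (2 * m) (2 * m) (by linarith) (by linarith) (by linarith)
    (by linarith) (by linarith)
  have h3 := key 4 (4 * m) (by linarith) (by linarith) (by linarith)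
    (by linarith) (by linarith)
  have h4 := key 2 (2 * m) (by linarith) (by linarith) (by linarith)
    (by linarith) (by linarith)
  have hfin : (π ^ 3 + 10 * (π ^ 5 / 100)) / m ^ 4
      ≤ 16 * (π ^ 3 + 10 * (π ^ 5 / 100)) * (1 / (m + 1) ^ 4) := by
    have : (m + 1) ^ 4 ≤ (2 * m) ^ 4 := by gcongr; linarith
    rw [mul_one_div, div_le_div_iff₀ (by positivity) (by positivity)]
    have hC : 0 ≤ π ^ 3 + 10 * (π ^ 5 / 100) := by positivity
    have := mul_le_mul_of_nonneg_left this hC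
    linarith [this, show (π ^ 3 + 10 * (π ^ 5 / 100)) * (2 * m) ^ 4
      = 16 * (π ^ 3 + 10 * (π ^ 5 / 100)) * m ^ 4 by ring]
  rw [Real.norm_eq_abs, Real.norm_eq_abs, abs_of_nonneg (show 0 ≤ 1 / (m + 1) ^ 4 by positivity)]
  refine le_trans ?_ hfin
  rw [add_div, mul_div_assoc 10 (π ^ 5 / 100) (m ^ 4)]
  have hE : 0 ≤ π ^ 5 / 100 / m ^ 4 := by positivity
  rw [abs_le] at *
  constructor <;> linarith [h1.1, h1.2, h2.1, h2.2, h3.1, h3.2, h4.1, h4.2, hP.1, hP.2]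
end

section
/- As n → ∞ over the integers n ≥ 2, cos(π/(2n)) − cos(π/(2n−2)) = π²/(4n³) + O(1/n⁴); that is, the function n ↦ cos(π/(2n)) − cos(π/(2n−2)) − π²/(4n³) is O(n⁻⁴) along the filter atTop. -/
open Real Filter Asymptotics

/-- Asymptotics of the width gap for the polygon `R_{n-1}^+`:
`cos(π/2n) − cos(π/(2n−2)) = π²/(4n³) + O(1/n⁴)` as `n → ∞`. -/
theorem width_gap_Rplus_asymptotics :
    (fun n : ℕ =>
        cos (π / (2 * n)) - cos (π / (2 * (n : ℝ) - 2)) -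
          π ^ 2 / (4 * (n : ℝ) ^ 3)) =O[atTop]
      (fun n : ℕ => 1 / (n : ℝ) ^ 4) := by
  refine IsBigO.of_bound 1000 ?_
  filter_upwards [eventually_ge_atTop 4] with n hn
  have hx : (4 : ℝ) ≤ n := by exact_mod_cast hn
  generalize (n : ℝ) = x at hx
  have hx0 : 0 < x := by linarith
  have hx1 : 0 < x - 1 := by linarith
  have hx2 : 0 < 2 * x - 2 := by linarith
  have hpi := pi_pos
  have hpi4 := pi_le_four
  have hpow : (4 / x) ^ 4 = 256 * (1 / x ^ 4) := by
    field_simp; norm_num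
  have key : ∀ a : ℝ, 0 < a → a ≤ 4 / x →
      |cos a - (1 - a ^ 2 / 2)| ≤ 256 * (1 / x ^ 4) := by
    intro a ha hax
    have h1 : 4 / x ≤ 1 := by rw [div_le_one hx0]; exact hx
    have h2 := cos_bound (x := a) (by rw [abs_of_pos ha]; linarith)
    rw [abs_of_pos ha] at h2
    have h3 : a ^ 4 ≤ (4 / x) ^ 4 := by gcongr
    have h4 : 0 < a ^ 4 := by positivity
    linarith
  have ha := key (π / (2 * x)) (by positivity) (by
    rw [div_le_div_iff₀ (by positivity) hx0]; nlinarith)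
  have hb := key (π / (2 * x - 2)) (by positivity) (by
    rw [div_le_div_iff₀ hx2 hx0]; nlinarith)
  have hm : (π / (2 * x - 2)) ^ 2 / 2 - (π / (2 * x)) ^ 2 / 2 - π ^ 2 / (4 * x ^ 3)
      = π ^ 2 / 8 * ((3 * x - 2) / (x ^ 3 * (x - 1) ^ 2)) := by
    have e : 2 * x - 2 = 2 * (x - 1) := by ring
    have := hx1.ne'
    rw [e]; field_simp; ring
  have hq : (3 * x - 2) / (x ^ 3 * (x - 1) ^ 2) ≤ 12 * (1 / x ^ 4) := by
    rw [mul_one_div, div_le_div_iff₀ (by positivity) (by positivity)]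
    have : (3 * x - 2) * x ≤ 12 * (x - 1) ^ 2 := by nlinarith
    have h3 : 0 < x ^ 3 := by positivity
    nlinarith [mul_le_mul_of_nonneg_left this h3.le]
  have hq0 : 0 ≤ (3 * x - 2) / (x ^ 3 * (x - 1) ^ 2) :=
    div_nonneg (by linarith) (by positivity)
  have hp : π ^ 2 / 8 ≤ 2 := by nlinarith
  have hp0 : 0 ≤ π ^ 2 / 8 := by positivity
  have hm1 : π ^ 2 / 8 * ((3 * x - 2) / (x ^ 3 * (x - 1) ^ 2)) ≤ 2 * (12 * (1 / x ^ 4)) :=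
    mul_le_mul hp hq hq0 (by norm_num)
  have hm0 := mul_nonneg hp0 hq0
  have hi : 0 < 1 / x ^ 4 := by positivity
  rw [Real.norm_eq_abs, Real.norm_eq_abs, abs_of_pos hi]
  rw [abs_le] at *
  constructor <;> linarith [ha.1, ha.2, hb.1, hb.2]
end
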